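/- arXiv:2403.08788 — 2 statements merged into one kernel-verified Lean document; each statement's English description precedes it below -/
import Mathlib

section
/- Fix real numbers z0, z2, z3 with z0 ≤ z2. The map t ↦ IoU(z0, t, z2, z3) is unimodal with peak at g1 on the valid range: (i) if t ≤ t' ≤ g1 and t' ≤ z3, then IoU(z0, t, z2, z3) ≤ IoU(z0, t', z2, z3); (ii) if g1 ≤ t ≤ t' ≤ z3, then IoU(z0, t', z2, z3) ≤ IoU(z0, t, z2, z3). -/
/-!
Moving the lower edge `t` only affects the box area and the overlap height. Below `g1` the
intersection is constant while the box area decreases in `t`, so the quotient increases. Above `g1`,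
write `I, A` and `I', A'` for the intersection and box areas at `t ≤ t'`, and `G` for the ground-truth
area. After cross-multiplication the claim is `I' * (A + G) ≤ I * (A' + G)`, which follows from
`I' ≤ I` and `I' * A ≤ I * A'`; the latter holds because shrinking the box by a strip removes
at least as large a proportion of the overlap height as of the box height
(`overlap_height_mul_le`). Denominators are positive since the intersection lies inside the box
(`interArea_le_area`).
-/

/-- Area of a box given by corner coordinates `(z0, z1)` (bottom-left) and
`(z2, z3)` (upper-right). -/
noncomputable def area (z0 z1 z2 z3 : ℝ) : ℝ := (z2 - z0) * (z3 - z1)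

/-- Area of the intersection of the box `(z0, z1, z2, z3)` with the
ground-truth box `(g0, g1, g2, g3)`. -/
noncomputable def interArea (g0 g1 g2 g3 z0 z1 z2 z3 : ℝ) : ℝ :=
  max 0 (min z2 g2 - max z0 g0) * max 0 (min z3 g3 - max z1 g1)

/-- Intersection over union of the box `(z0, z1, z2, z3)` with the
ground-truth box `(g0, g1, g2, g3)`. -/
noncomputable def iou (g0 g1 g2 g3 z0 z1 z2 z3 : ℝ) : ℝ :=
  interArea g0 g1 g2 g3 z0 z1 z2 z3 /
    (area z0 z1 z2 z3 + area g0 g1 g2 g3 - interArea g0 g1 g2 g3 z0 z1 z2 z3)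

theorem interArea_nonneg (g0 g1 g2 g3 z0 z1 z2 z3 : ℝ) :
    0 ≤ interArea g0 g1 g2 g3 z0 z1 z2 z3 :=
  mul_nonneg (le_max_left _ _) (le_max_left _ _)

theorem overlap_le_length (a b g h : ℝ) (hab : a ≤ b) :
    max 0 (min b h - max a g) ≤ b - a :=
  max_le (sub_nonneg.2 hab) (sub_le_sub (min_le_left _ _) (le_max_left _ _))

theorem interArea_le_area (g0 g1 g2 g3 z0 z1 z2 z3 : ℝ) (h02 : z0 ≤ z2) (h13 : z1 ≤ z3) :
    interArea g0 g1 g2 g3 z0 z1 z2 z3 ≤ area z0 z1 z2 z3 :=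
  mul_le_mul (overlap_le_length _ _ _ _ h02) (overlap_le_length _ _ _ _ h13)
    (le_max_left _ _) (sub_nonneg.2 h02)

/-- With `m ≤ z` the top of the overlap, the ratio of overlap height `max 0 (m - t)` to box height
`z - t` is antitone in `t`; stated without division. -/
theorem overlap_height_mul_le (m z t t' : ℝ) (hm : m ≤ z) (htt : t ≤ t') (htz : t' ≤ z) :
    max 0 (m - t') * (z - t) ≤ max 0 (m - t) * (z - t') := by
  rcases le_total m t' with h | h
  · rw [max_eq_left (by linarith : m - t' ≤ 0), zero_mul]
    exact mul_nonneg (le_max_left _ _) (sub_nonneg.2 htz)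
  · rw [max_eq_right (by linarith : 0 ≤ m - t'), max_eq_right (by linarith : 0 ≤ m - t)]
    nlinarith [mul_nonneg (sub_nonneg.2 htt) (sub_nonneg.2 hm)]

theorem stmt_5
    (g0 g1 g2 g3 : ℝ) (hg02 : g0 < g2) (hg13 : g1 < g3)
    (z0 z2 z3 : ℝ) (hb02 : z0 ≤ z2) :
    (∀ t t' : ℝ, t ≤ t' → t' ≤ g1 → t' ≤ z3 →
      iou g0 g1 g2 g3 z0 t z2 z3 ≤ iou g0 g1 g2 g3 z0 t' z2 z3) ∧
    (∀ t t' : ℝ, g1 ≤ t → t ≤ t' → t' ≤ z3 →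
      iou g0 g1 g2 g3 z0 t' z2 z3 ≤ iou g0 g1 g2 g3 z0 t z2 z3) := by
  have hG : 0 < area g0 g1 g2 g3 := mul_pos (sub_pos.2 hg02) (sub_pos.2 hg13)
  have hW : 0 ≤ z2 - z0 := sub_nonneg.2 hb02
  constructor
  · intro t t' htt ht'g ht'z
    have hI : interArea g0 g1 g2 g3 z0 t z2 z3 = interArea g0 g1 g2 g3 z0 t' z2 z3 := by
      unfold interArea
      rw [max_eq_right ht'g, max_eq_right (htt.trans ht'g)]
    have hA : area z0 t' z2 z3 ≤ area z0 t z2 z3 :=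
      mul_le_mul_of_nonneg_left (by linarith) hW
    have hIA := interArea_le_area g0 g1 g2 g3 z0 t' z2 z3 hb02 ht'z
    unfold iou
    rw [hI]
    exact div_le_div_of_nonneg_left (interArea_nonneg _ _ _ _ _ _ _ _) (by linarith) (by linarith)
  · intro t t' hgt htt ht'z
    have hIA := interArea_le_area g0 g1 g2 g3 z0 t z2 z3 hb02 (htt.trans ht'z)
    have hIA' := interArea_le_area g0 g1 g2 g3 z0 t' z2 z3 hb02 ht'z
    have hw : 0 ≤ max 0 (min z2 g2 - max z0 g0) := le_max_left _ _
    have hII : interArea g0 g1 g2 g3 z0 t' z2 z3 ≤ interArea g0 g1 g2 g3 z0 t z2 z3 := by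
      unfold interArea
      gcongr
    have hcross : interArea g0 g1 g2 g3 z0 t' z2 z3 * area z0 t z2 z3 ≤
        interArea g0 g1 g2 g3 z0 t z2 z3 * area z0 t' z2 z3 := by
      unfold interArea area
      rw [max_eq_left hgt, max_eq_left (hgt.trans htt)]
      have h := mul_le_mul_of_nonneg_left
        (overlap_height_mul_le (min z3 g3) z3 t t' (min_le_left _ _) htt ht'z)
        (mul_nonneg hw hW)
      linarith
    unfold iou
    rw [div_le_div_iff₀ (by linarith) (by linarith)]
    nlinarith [mul_le_mul_of_nonneg_right hII hG.le]
end

section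
/- Fix real numbers z0, z1, z3 with z1 ≤ z3. The map t ↦ IoU(z0, z1, t, z3) is unimodal with peak at g2 on the valid range: (i) if z0 ≤ t ≤ t' ≤ g2, then IoU(z0, z1, t, z3) ≤ IoU(z0, z1, t', z3); (ii) if g2 ≤ t ≤ t' and z0 ≤ t, then IoU(z0, z1, t', z3) ≤ IoU(z0, z1, t, z3). -/
/-- The union of a box with a nondegenerate ground-truth box has positive area. -/
lemma union_pos (g0 g1 g2 g3 : ℝ) (hg02 : g0 < g2) (hg13 : g1 < g3)
    (z0 z1 t z3 : ℝ) (hb13 : z1 ≤ z3) (ht : z0 ≤ t) :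
    0 < area z0 z1 t z3 + area g0 g1 g2 g3 - interArea g0 g1 g2 g3 z0 z1 t z3 := by
  have hA : 0 < area g0 g1 g2 g3 := mul_pos (sub_pos.2 hg02) (sub_pos.2 hg13)
  have hI : interArea g0 g1 g2 g3 z0 z1 t z3 ≤ area z0 z1 t z3 := by
    refine mul_le_mul ?_ ?_ (le_max_left _ _) (sub_nonneg.2 ht)
    · exact max_le (sub_nonneg.2 ht) (sub_le_sub (min_le_left _ _) (le_max_left _ _))
    · exact max_le (sub_nonneg.2 hb13) (sub_le_sub (min_le_left _ _) (le_max_left _ _))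
  linarith

lemma div_union_le_div_union {I I' S S' A : ℝ} (hD : 0 < S + A - I) (hD' : 0 < S' + A - I')
    (h : I * (S' + A) ≤ I' * (S + A)) : I / (S + A - I) ≤ I' / (S' + A - I') := by
  rw [div_le_div_iff₀ hD hD']
  linarith

theorem stmt_6
    (g0 g1 g2 g3 : ℝ) (hg02 : g0 < g2) (hg13 : g1 < g3)
    (z0 z1 z3 : ℝ) (hb13 : z1 ≤ z3) :
    (∀ t t' : ℝ, z0 ≤ t → t ≤ t' → t' ≤ g2 →
      iou g0 g1 g2 g3 z0 z1 t z3 ≤ iou g0 g1 g2 g3 z0 z1 t' z3) ∧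
    (∀ t t' : ℝ, g2 ≤ t → t ≤ t' → z0 ≤ t →
      iou g0 g1 g2 g3 z0 z1 t' z3 ≤ iou g0 g1 g2 g3 z0 z1 t z3) := by
  have hA : 0 < area g0 g1 g2 g3 := mul_pos (sub_pos.2 hg02) (sub_pos.2 hg13)
  have hH : 0 ≤ z3 - z1 := sub_nonneg.2 hb13
  have hh : 0 ≤ max 0 (min z3 g3 - max z1 g1) := le_max_left _ _
  constructor
  · intro t t' ht htt' ht'
    refine div_union_le_div_union (union_pos _ _ _ _ hg02 hg13 _ _ _ _ hb13 ht)
      (union_pos _ _ _ _ hg02 hg13 _ _ _ _ hb13 (ht.trans htt')) ?_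
    have hS : 0 ≤ area z0 z1 t z3 := mul_nonneg (sub_nonneg.2 ht) hH
    have hm : z0 ≤ max z0 g0 := le_max_left _ _
    unfold interArea
    rw [min_eq_left ht', min_eq_left (htt'.trans ht')]
    generalize max 0 (min z3 g3 - max z1 g1) = h at *
    generalize max z0 g0 = m at *
    rcases le_total t m with htm | htm
    · rw [max_eq_left (sub_nonpos.2 htm), zero_mul, zero_mul]
      exact mul_nonneg (mul_nonneg (le_max_left _ _) hh) (by linarith)
    · rw [max_eq_right (sub_nonneg.2 htm), max_eq_right (sub_nonneg.2 (htm.trans htt'))]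
      have h1 : 0 ≤ h * ((t' - t) * (m - z0) * (z3 - z1)) :=
        mul_nonneg hh (mul_nonneg (mul_nonneg (sub_nonneg.2 htt') (sub_nonneg.2 hm)) hH)
      have h2 : 0 ≤ h * ((t' - t) * area g0 g1 g2 g3) :=
        mul_nonneg hh (mul_nonneg (sub_nonneg.2 htt') hA.le)
      simp only [area] at h2 ⊢
      linarith
  · intro t t' ht htt' hzt
    refine div_union_le_div_union
      (union_pos _ _ _ _ hg02 hg13 _ _ _ _ hb13 (hzt.trans htt'))
      (union_pos _ _ _ _ hg02 hg13 _ _ _ _ hb13 hzt) ?_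
    unfold interArea
    rw [min_eq_right ht, min_eq_right (ht.trans htt')]
    refine mul_le_mul_of_nonneg_left ?_ (mul_nonneg (le_max_left _ _) hh)
    have : area z0 z1 t z3 ≤ area z0 z1 t' z3 :=
      mul_le_mul_of_nonneg_right (sub_le_sub_right htt' _) hH
    linarith
end
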